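/- Let a, b, n be positive integers, let A and B be 2^n × 2^n complex matrices, let α, β > 0, let U_A be a unitary matrix indexed by Fin 2^a × Fin 2^n that is an exact α-block encoding of A, and let U_B be a unitary matrix indexed by Fin 2^b × Fin 2^n that is an exact β-block encoding of B. Then there exists a unitary matrix W indexed by Fin 2^a × Fin 2^b × Fin 2^n such that W((0,0,s₁),(0,0,s₂)) = (AB)_{s₁s₂}/(αβ) for all s₁,s₂ ∈ Fin 2^n; that is, W is an exact (αβ)-block encoding of the matrix product AB. -/

import Mathlib

open Matrix

/-!
Let `UA` act on the first ancilla register and the system, and `UB` on the second ancilla register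
and the system, each as the identity on the remaining register. The witness is the product `UA * UB`
of these extensions. The extension of `UB` commutes with the projection onto `i₀` in the first
register and that of `UA` with the projection onto `j₀` in the second, so that
`⟨i₀, j₀| UA UB |i₀, j₀⟩ = ⟨i₀| UA |i₀⟩ ⟨j₀| UB |j₀⟩`.
-/

open scoped Kronecker

section Kronecker

variable {R κ m n p q : Type*} [NonAssocSemiring R] [Fintype κ] [DecidableEq κ]

theorem submatrix_mul_one_kronecker [Fintype m] (X : Matrix p (κ × m) R) (Y : Matrix m n R)
    (f : q → p) (i : κ) :
    (X * ((1 : Matrix κ κ R) ⊗ₖ Y)).submatrix f (Prod.mk i) =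
      X.submatrix f (Prod.mk i) * Y := by
  ext s t
  simp [mul_apply, Fintype.sum_prod_type_right, one_apply]

theorem submatrix_one_kronecker_mul [Fintype n] (X : Matrix m n R) (Y : Matrix (κ × n) p R)
    (i : κ) (f : q → p) :
    (((1 : Matrix κ κ R) ⊗ₖ X) * Y).submatrix (Prod.mk i) f =
      X * Y.submatrix (Prod.mk i) f := by
  ext s t
  simp [mul_apply, Fintype.sum_prod_type_right, one_apply]

end Kronecker

theorem submatrix_equiv_mem_unitary {R m n : Type*} [Semiring R] [StarRing R]
    [Fintype m] [DecidableEq m] [Fintype n] [DecidableEq n] {U : Matrix n n R}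
    (hU : U ∈ unitary (Matrix n n R)) (e : m ≃ n) : U.submatrix e e ∈ unitary (Matrix m m R) := by
  rw [Unitary.mem_iff, star_eq_conjTranspose] at hU ⊢
  simp only [conjTranspose_submatrix, submatrix_mul_equiv, hU, submatrix_one_equiv, and_self]

/-- The exchange of the first two factors of a triple product, used to let an operator on the
outer two registers skip the middle one. -/
def prodLeftComm (α β γ : Type*) : α × β × γ ≃ β × α × γ where
  toFun x := (x.2.1, x.1, x.2.2)
  invFun x := (x.2.1, x.1, x.2.2)

section IdMiddle

variable {R κ m : Type*}

/-- The extension of an operator on the registers `κ` and `m` to `κ × ι × m` which is the identity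
on the inserted register `ι`. -/
def idMiddle [MulZeroOneClass R] (ι : Type*) [DecidableEq ι] (U : Matrix (κ × m) (κ × m) R) :
    Matrix (κ × ι × m) (κ × ι × m) R :=
  ((1 : Matrix ι ι R) ⊗ₖ U).submatrix (prodLeftComm κ ι m) (prodLeftComm κ ι m)

variable (ι : Type*) [DecidableEq ι]

theorem submatrix_idMiddle [MulZeroOneClass R] (U : Matrix (κ × m) (κ × m) R) (i j : κ) :
    (idMiddle ι U).submatrix (Prod.mk i) (Prod.mk j) =
      (1 : Matrix ι ι R) ⊗ₖ U.submatrix (Prod.mk i) (Prod.mk j) :=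
  rfl

theorem idMiddle_mem_unitary [Semiring R] [StarRing R] [Fintype ι] [Fintype κ]
    [DecidableEq κ] [Fintype m] [DecidableEq m] {U : Matrix (κ × m) (κ × m) R}
    (hU : U ∈ unitary (Matrix (κ × m) (κ × m) R)) :
    idMiddle ι U ∈ unitary (Matrix (κ × ι × m) (κ × ι × m) R) :=
  submatrix_equiv_mem_unitary (kronecker_mem_unitary (one_mem _) hU) _

end IdMiddle

theorem submatrix_idMiddle_mul_one_kronecker {R κ ι m : Type*} [NonAssocSemiring R]
    [Fintype κ] [DecidableEq κ] [Fintype ι] [DecidableEq ι] [Fintype m]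
    (UA : Matrix (κ × m) (κ × m) R) (UB : Matrix (ι × m) (ι × m) R) (i₀ : κ) (j₀ : ι) :
    (idMiddle ι UA * ((1 : Matrix κ κ R) ⊗ₖ UB)).submatrix
        (fun s => (i₀, j₀, s)) (fun s => (i₀, j₀, s)) =
      UA.submatrix (Prod.mk i₀) (Prod.mk i₀) * UB.submatrix (Prod.mk j₀) (Prod.mk j₀) :=
  calc
    _ = ((idMiddle ι UA * ((1 : Matrix κ κ R) ⊗ₖ UB)).submatrix
          (Prod.mk i₀) (Prod.mk i₀)).submatrix (Prod.mk j₀) (Prod.mk j₀) := rfl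
    _ = (((1 : Matrix ι ι R) ⊗ₖ UA.submatrix (Prod.mk i₀) (Prod.mk i₀)) * UB).submatrix
          (Prod.mk j₀) (Prod.mk j₀) := by
      rw [submatrix_mul_one_kronecker, submatrix_idMiddle]
    _ = _ := submatrix_one_kronecker_mul ..

/-- `U` is an exact `α`-block encoding of `M`: it is unitary and its block at the indices in the
range of `e` is `M / α`, written `α • block = M`. For ancilla value `i₀` the map `e` is
`s ↦ (i₀, s)`; leaving it arbitrary allows any grouping of several ancilla registers. -/
structure IsBlockEncoding {𝕜 R m n : Type*} [Semiring R] [StarRing R] [SMul 𝕜 R] [Fintype n]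
    [DecidableEq n] (e : m → n) (α : 𝕜) (U : Matrix n n R) (M : Matrix m m R) : Prop where
  mem_unitary : U ∈ unitary (Matrix n n R)
  smul_submatrix : α • U.submatrix e e = M

theorem isBlockEncoding_iff_apply_eq_div {K m n : Type*} [Field K] [StarRing K] [Fintype n]
    [DecidableEq n] {e : m → n} {α : K} (hα : α ≠ 0) {U : Matrix n n K} {M : Matrix m m K} :
    IsBlockEncoding e α U M ↔
      U ∈ unitaryGroup n K ∧ ∀ s t, U (e s) (e t) = M s t / α := by
  have h_block : α • U.submatrix e e = M ↔ ∀ s t, U (e s) (e t) = M s t / α := by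
    simp only [← Matrix.ext_iff, Matrix.smul_apply, submatrix_apply, smul_eq_mul, eq_div_iff hα,
      mul_comm α]
  exact ⟨fun h => ⟨h.mem_unitary, h_block.1 h.smul_submatrix⟩,
    fun h => ⟨h.1, h_block.2 h.2⟩⟩

theorem block_encoding_product_general {𝕜 R κ ι m : Type*} [CommSemiring 𝕜] [Semiring R]
    [StarRing R] [Algebra 𝕜 R] [Fintype κ] [DecidableEq κ] [Fintype ι] [DecidableEq ι]
    [Fintype m] [DecidableEq m] {i₀ : κ} {j₀ : ι} {α β : 𝕜} {A B : Matrix m m R}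
    {UA : Matrix (κ × m) (κ × m) R} {UB : Matrix (ι × m) (ι × m) R}
    (hA : IsBlockEncoding (Prod.mk i₀) α UA A) (hB : IsBlockEncoding (Prod.mk j₀) β UB B) :
    ∃ W : Matrix (κ × ι × m) (κ × ι × m) R,
      IsBlockEncoding (fun s => (i₀, j₀, s)) (α * β) W (A * B) := by
  refine ⟨idMiddle ι UA * ((1 : Matrix κ κ R) ⊗ₖ UB), ?_, ?_⟩
  · exact mul_mem (idMiddle_mem_unitary ι hA.mem_unitary)
      (kronecker_mem_unitary (one_mem _) hB.mem_unitary)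
  · rw [submatrix_idMiddle_mul_one_kronecker, ← smul_mul_smul_comm, hA.smul_submatrix,
      hB.smul_submatrix]

/-- Given an exact `α`-block encoding `U_A` of `A` (on `a` ancilla qubits) and an exact
`β`-block encoding `U_B` of `B` (on `b` ancilla qubits), there exists a unitary `W` (on
`a + b` ancilla qubits) that is an exact `(αβ)`-block encoding of the product `AB`. -/
theorem block_encoding_product (a b n : ℕ) (ha : 0 < a) (hb : 0 < b) (hn : 0 < n)
    (A B : Matrix (Fin (2 ^ n)) (Fin (2 ^ n)) ℂ)
    (α β : ℝ) (hα : 0 < α) (hβ : 0 < β)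
    (UA : Matrix (Fin (2 ^ a) × Fin (2 ^ n)) (Fin (2 ^ a) × Fin (2 ^ n)) ℂ)
    (hUA : UA ∈ Matrix.unitaryGroup (Fin (2 ^ a) × Fin (2 ^ n)) ℂ)
    (hUAA : ∀ s₁ s₂ : Fin (2 ^ n), UA (0, s₁) (0, s₂) = A s₁ s₂ / (α : ℂ))
    (UB : Matrix (Fin (2 ^ b) × Fin (2 ^ n)) (Fin (2 ^ b) × Fin (2 ^ n)) ℂ)
    (hUB : UB ∈ Matrix.unitaryGroup (Fin (2 ^ b) × Fin (2 ^ n)) ℂ)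
    (hUBB : ∀ s₁ s₂ : Fin (2 ^ n), UB (0, s₁) (0, s₂) = B s₁ s₂ / (β : ℂ)) :
    ∃ W : Matrix (Fin (2 ^ a) × Fin (2 ^ b) × Fin (2 ^ n))
        (Fin (2 ^ a) × Fin (2 ^ b) × Fin (2 ^ n)) ℂ,
      W ∈ Matrix.unitaryGroup (Fin (2 ^ a) × Fin (2 ^ b) × Fin (2 ^ n)) ℂ ∧
      ∀ s₁ s₂ : Fin (2 ^ n), W (0, 0, s₁) (0, 0, s₂) = (A * B) s₁ s₂ / ((α : ℂ) * β) := by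
  have hα' : (α : ℂ) ≠ 0 := mod_cast hα.ne'
  have hβ' : (β : ℂ) ≠ 0 := mod_cast hβ.ne'
  obtain ⟨W, hW⟩ := block_encoding_product_general
    ((isBlockEncoding_iff_apply_eq_div hα').2 ⟨hUA, hUAA⟩)
    ((isBlockEncoding_iff_apply_eq_div hβ').2 ⟨hUB, hUBB⟩)
  exact ⟨W, (isBlockEncoding_iff_apply_eq_div (mul_ne_zero hα' hβ')).1 hW⟩
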